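/- Assume x̄₀ > 0, let T ≥ 0 be such that |φ_t(x₀)₂| < |φ_t(x₀)₁| for all t ≥ T, and for z ∈ ℝ² set t_z = inf{t ≥ T : |φ_t(x₀ + z)₁| = |φ_t(x₀ + z)₂|}. Then for every C > 0 and ε > 0 there exists ρ > 0 such that for all z with 0 < |z| < ρ, D₀z > 0 and |z| ≤ C (D₀z), the infimum t_z is attained and finite and |t_z − (1/(λ+μ)) log(x̄₀/(D₀z))| < ε (intermediate claim in the proof of Theorem 3.5: asymptotics of the diagonal-crossing time). -/

import Mathlib

/-! The linearization `h` turns the flow into `e^{Bt} = diag(e^{-μt}, e^{λt})`, so everything is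
read off from `a = h(x₀ + z)₁` and `b = h(x₀ + z)₂`.

* `phi_eq_hinv`: as long as `e^{Bs} h(x)` stays in the ball of radius `δ`, one has
  `φ_s(x) = h⁻¹(e^{Bs} h(x))`. The set of times where this holds is clopen in the time interval.
* `h_base`: `h(x₀) = (x̄₀, 0)`, and `inner_eq_fderiv_h`: `D₀` is the second row of `Dh(x₀)`. Hence
  `a → x̄₀` and, in the cone `|z| ≤ C D₀z`, `b / D₀z → 1`.
* With `L = log(x̄₀ / D₀z) / (λ + μ)` and `r = (b / D₀z) / (a / x̄₀) → 1`, the linear trajectory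
  `y(t) = (a e^{-μt}, b e^{λt})` satisfies `y₂(t) = r e^{(λ+μ)(t-L)} y₁(t)`. So for
  `q = e^{-(λ+μ)ε/2} < 1` one gets `y₂ ≤ q y₁` up to time `L - ε` and `y₁ ≤ q y₂` at `L + ε`.
* `hinv_isLittleO`: `h⁻¹(y) = y + o(|y|)`, so these strict cone inclusions survive under `h⁻¹` while
  `y` is small (`coord_lt_of_close`). On the compact initial time interval where `y` is not yet
  small, the tube lemma transfers the strict inequality along the orbit of `x₀` to nearby orbits
  (`eventually_below_diagonal`). Both regimes are combined in `bounds_of_ratio`.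

Therefore no crossing happens on `[T, L - ε]`, and one happens in `(L - ε, L + ε)` by the
intermediate value theorem (`crossing_of_bounds`). -/

open Filter Topology Metric Real RealInnerProductSpace

noncomputable section

/-- An element of `ℝ²` (with the Euclidean norm) with given coordinates. -/
def vec2 (a b : ℝ) : EuclideanSpace ℝ (Fin 2) := (WithLp.equiv 2 (Fin 2 → ℝ)).symm ![a, b]

/-- The setup of Turner, "Convergence of Markov processes near saddle fixed points",
Section 3: a saddle-type vector field `b x = B x + τ x` with `B = diag(-μ, λ)`,
a flow `φ` for `b`, a Hartman linearization `h` on a neighbourhood `U` of `0`,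
and a radius `δ` on which `h` is close to the identity. -/
structure SaddleFlow where
  lam : ℝ
  mu : ℝ
  lam_pos : 0 < lam
  mu_pos : 0 < mu
  /-- the nonlinearity τ -/
  tau : EuclideanSpace ℝ (Fin 2) → EuclideanSpace ℝ (Fin 2)
  tau_smooth : ContDiff ℝ 2 tau
  tau_zero : tau 0 = 0
  dtau_zero : fderiv ℝ tau 0 = 0
  /-- the flow of `b x = B x + τ x` -/
  phi : ℝ → EuclideanSpace ℝ (Fin 2) → EuclideanSpace ℝ (Fin 2)
  phi_zero : ∀ x, phi 0 x = x
  phi_hasDerivAt : ∀ t x, HasDerivAt (fun s => phi s x)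
      (vec2 (-mu * (phi t x) 0) (lam * (phi t x) 1) + tau (phi t x)) t
  phi_add : ∀ t s x, phi (t + s) x = phi t (phi s x)
  phi_contDiff : ∀ t, ContDiff ℝ 1 (phi t)
  /-- the domain of the Hartman linearization -/
  U : Set (EuclideanSpace ℝ (Fin 2))
  U_open : IsOpen U
  U_mem : (0 : EuclideanSpace ℝ (Fin 2)) ∈ U
  /-- the linearizing C¹ diffeomorphism `h : U → V = h '' U` and its inverse -/
  h : EuclideanSpace ℝ (Fin 2) → EuclideanSpace ℝ (Fin 2)
  hinv : EuclideanSpace ℝ (Fin 2) → EuclideanSpace ℝ (Fin 2)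
  h_smooth : ∀ x ∈ U, ContDiffAt ℝ 1 h x
  hinv_smooth : ∀ y ∈ h '' U, ContDiffAt ℝ 1 hinv y
  V_open : IsOpen (h '' U)
  left_inv : ∀ x ∈ U, hinv (h x) = x
  right_inv : ∀ y ∈ h '' U, h (hinv y) = y
  /-- the Hölder exponent of the partial derivatives of `h`, `h⁻¹` -/
  alpha0 : ℝ
  alpha0_mem : alpha0 ∈ Set.Ioc (0 : ℝ) 1
  holder : ∃ C : ℝ,
      (∀ x ∈ U, ∀ y ∈ U, ‖fderiv ℝ h x - fderiv ℝ h y‖ ≤ C * ‖x - y‖ ^ alpha0) ∧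
      (∀ x ∈ h '' U, ∀ y ∈ h '' U,
        ‖fderiv ℝ hinv x - fderiv ℝ hinv y‖ ≤ C * ‖x - y‖ ^ alpha0)
  /-- `h x = x + o(|x|)` as `x → 0` -/
  h_littleO : (fun x => h x - x) =o[𝓝 (0 : EuclideanSpace ℝ (Fin 2))] (fun x => x)
  /-- the conjugation `h (φ_t x) = e^{Bt} (h x)` -/
  h_conj : ∀ t x, x ∈ U → phi t x ∈ U →
      h (phi t x) = vec2 (Real.exp (-mu * t) * (h x) 0) (Real.exp (lam * t) * (h x) 1)
  /-- the radius δ -/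
  delta : ℝ
  delta_pos : 0 < delta
  delta_lt_one : delta < 1
  ball_sub : closedBall (0 : EuclideanSpace ℝ (Fin 2)) delta ⊆ U ∩ h '' U
  /-- `sup_{0<|x|<δ} max(|h x|/|x|, |h⁻¹ x|/|x|) < 2` -/
  h_ratio : ∃ c : ℝ, c < 2 ∧ ∀ x : EuclideanSpace ℝ (Fin 2), ‖x‖ < delta →
      ‖h x‖ ≤ c * ‖x‖ ∧ ‖hinv x‖ ≤ c * ‖x‖
  /-- `sup_{|x|<δ} max(‖Dh(x) − I‖, ‖Dh⁻¹(x) − I‖) < 1/2` -/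
  deriv_close : ∃ c : ℝ, c < 1/2 ∧ ∀ x : EuclideanSpace ℝ (Fin 2), ‖x‖ < delta →
      ‖fderiv ℝ h x - ContinuousLinearMap.id ℝ (EuclideanSpace ℝ (Fin 2))‖ ≤ c ∧
      ‖fderiv ℝ hinv x - ContinuousLinearMap.id ℝ (EuclideanSpace ℝ (Fin 2))‖ ≤ c


/-! ### Elementary plane geometry -/

@[simp] lemma vec2_apply_zero (a b : ℝ) : vec2 a b 0 = a := rfl
@[simp] lemma vec2_apply_one (a b : ℝ) : vec2 a b 1 = b := rfl

lemma norm_le_abs_add_abs (y : EuclideanSpace ℝ (Fin 2)) : ‖y‖ ≤ |y 0| + |y 1| := by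
  rw [EuclideanSpace.norm_eq, Fin.sum_univ_two]
  refine Real.sqrt_le_iff.2 ⟨by positivity, ?_⟩
  simp only [Real.norm_eq_abs]
  nlinarith [mul_nonneg (abs_nonneg (y 0)) (abs_nonneg (y 1))]

lemma abs_apply_le_norm (y : EuclideanSpace ℝ (Fin 2)) (i : Fin 2) : |y i| ≤ ‖y‖ := by
  simpa using PiLp.norm_apply_le y i

/-- A relative perturbation of size `(1 - q) / 8` keeps a vector of the cone `|y j| ≤ q |y i|`
strictly on the same side of the diagonal. -/
lemma coord_lt_of_close {w y : EuclideanSpace ℝ (Fin 2)} {i j : Fin 2} {q : ℝ} (hq : q < 1)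
    (hn : ‖y‖ ≤ |y i| + |y j|) (hw : ‖w - y‖ ≤ (1 - q) / 8 * ‖y‖)
    (hyi : 0 < |y i|) (hy : |y j| ≤ q * |y i|) : |w j| < |w i| := by
  have hi : |w i - y i| ≤ ‖w - y‖ := abs_apply_le_norm (w - y) i
  have hj : |w j - y j| ≤ ‖w - y‖ := abs_apply_le_norm (w - y) j
  have h1 := abs_sub_abs_le_abs_sub (w j) (y j)
  have h2 := abs_sub_abs_le_abs_sub (y i) (w i)
  rw [abs_sub_comm] at h2
  have h3 : ‖y‖ ≤ 2 * |y i| := by nlinarith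
  have h4 : (1 - q) / 8 * ‖y‖ ≤ (1 - q) / 8 * (2 * |y i|) := by gcongr
  nlinarith

namespace SaddleFlow

variable (S : SaddleFlow)

/-! ### The linear flow and the linearization near the origin -/

/-- The linear flow `e^{Bt} y`. -/
def lin (t : ℝ) (y : EuclideanSpace ℝ (Fin 2)) : EuclideanSpace ℝ (Fin 2) :=
  vec2 (Real.exp (-S.mu * t) * y 0) (Real.exp (S.lam * t) * y 1)

lemma continuous_lin :
    Continuous (fun p : ℝ × EuclideanSpace ℝ (Fin 2) => S.lin p.1 p.2) := by
  unfold lin vec2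
  refine (PiLp.continuous_toLp 2 (fun _ : Fin 2 => ℝ)).comp (continuous_pi fun i => ?_)
  fin_cases i <;> simp <;> fun_prop

lemma lin_zero (y : EuclideanSpace ℝ (Fin 2)) : S.lin 0 y = y := by
  ext i; fin_cases i <;> simp [lin]

lemma continuous_phi (x : EuclideanSpace ℝ (Fin 2)) : Continuous (fun t => S.phi t x) :=
  continuous_iff_continuousAt.2 fun t => (S.phi_hasDerivAt t x).continuousAt

lemma mem_U {x : EuclideanSpace ℝ (Fin 2)} (hx : ‖x‖ ≤ S.delta) : x ∈ S.U :=
  (S.ball_sub (by simpa using hx)).1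

lemma mem_V {x : EuclideanSpace ℝ (Fin 2)} (hx : ‖x‖ ≤ S.delta) : x ∈ S.h '' S.U :=
  (S.ball_sub (by simpa using hx)).2

lemma continuousAt_hinv {y : EuclideanSpace ℝ (Fin 2)} (hy : ‖y‖ ≤ S.delta) :
    ContinuousAt S.hinv y := (S.hinv_smooth y (S.mem_V hy)).continuousAt

lemma hinv_mem {y : EuclideanSpace ℝ (Fin 2)} (hy : y ∈ S.h '' S.U) : S.hinv y ∈ S.U := by
  obtain ⟨x, hx, rfl⟩ := hy
  rwa [S.left_inv x hx]

lemma h_zero : S.h 0 = 0 := by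
  obtain ⟨c, -, hc⟩ := S.h_ratio
  simpa using (hc 0 (by simpa using S.delta_pos)).1

lemma hasFDerivAt_h_zero :
    HasFDerivAt S.h (ContinuousLinearMap.id ℝ (EuclideanSpace ℝ (Fin 2))) 0 := by
  rw [hasFDerivAt_iff_isLittleO_nhds_zero]
  simpa [S.h_zero] using S.h_littleO

lemma hinv_isLittleO :
    (fun y => S.hinv y - y) =o[𝓝 (0 : EuclideanSpace ℝ (Fin 2))] (fun y => y) := by
  have h0 : S.hinv 0 = 0 := by simpa [S.h_zero] using S.left_inv 0 S.U_mem
  have hc : ContinuousAt S.hinv 0 := S.continuousAt_hinv (by simpa using S.delta_pos.le)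
  have hd : HasFDerivAt S.hinv
      ((ContinuousLinearEquiv.refl ℝ (EuclideanSpace ℝ (Fin 2))).symm :
        EuclideanSpace ℝ (Fin 2) →L[ℝ] EuclideanSpace ℝ (Fin 2)) 0 := by
    refine HasFDerivAt.of_local_left_inverse (f := S.h) hc ?_ ?_
    · rw [h0]; exact S.hasFDerivAt_h_zero
    · have : S.h '' S.U ∈ 𝓝 (0 : EuclideanSpace ℝ (Fin 2)) :=
        S.V_open.mem_nhds (S.mem_V (by simpa using S.delta_pos.le))
      filter_upwards [this] with y hy using S.right_inv y hy
  rw [hasFDerivAt_iff_isLittleO_nhds_zero] at hd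
  simpa [h0] using hd

/-! ### Orbits in linearized coordinates -/

/-- The nonlinear orbit is the `h⁻¹`-image of the linear one while the latter stays in the
`δ`-ball. -/
lemma phi_eq_hinv {x : EuclideanSpace ℝ (Fin 2)} (hx : x ∈ S.U) {t : ℝ}
    (hb : ∀ s ∈ Set.Icc 0 t, ‖S.lin s (S.h x)‖ ≤ S.delta) {s : ℝ} (hs : s ∈ Set.Icc 0 t) :
    S.phi s x = S.hinv (S.lin s (S.h x)) := by
  have hlin : Continuous (fun s : ℝ => S.lin s (S.h x)) :=
    S.continuous_lin.comp (by fun_prop : Continuous fun s : ℝ => (s, S.h x))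
  have hcont : ContinuousOn (fun s => S.hinv (S.lin s (S.h x))) (Set.Icc 0 t) := fun u hu =>
    (ContinuousAt.comp (f := fun s : ℝ => S.lin s (S.h x)) (S.continuousAt_hinv (hb u hu))
      hlin.continuousAt).continuousWithinAt
  have hclosed : IsClosed ({s | S.phi s x = S.hinv (S.lin s (S.h x))} ∩ Set.Icc 0 t) := by
    have := ((S.continuous_phi x).continuousOn.sub hcont).preimage_isClosed_of_isClosed
      isClosed_Icc (isClosed_singleton (x := (0 : EuclideanSpace ℝ (Fin 2))))
    convert this using 1
    ext u
    simp [sub_eq_zero, and_comm]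
  refine hclosed.Icc_subset_of_forall_mem_nhdsWithin ?_ ?_ hs
  · simp [S.lin_zero, S.phi_zero, S.left_inv x hx]
  · rintro u ⟨hu, hut⟩
    -- near `u` the orbit stays in the open set `U`, where the conjugation relation applies
    have hU : S.phi u x ∈ S.U := by
      have hu : S.phi u x = S.hinv (S.lin u (S.h x)) := hu
      rw [hu]
      exact S.hinv_mem (S.mem_V (hb u ⟨hut.1, hut.2.le⟩))
    apply mem_nhdsWithin_of_mem_nhds
    filter_upwards [(S.continuous_phi x).continuousAt.preimage_mem_nhds (S.U_open.mem_nhds hU)]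
      with v hv
    have := S.h_conj v x hx hv
    change S.phi v x = S.hinv (S.lin v (S.h x))
    rw [lin, ← this, S.left_inv _ hv]

/-! ### Identification of `x̄₀` and `D₀` -/

variable {S} in
/-- In linearized coordinates the stable point `x₀` is `(x̄₀, 0)`. -/
lemma h_base {x₀ : EuclideanSpace ℝ (Fin 2)} (hx₀ : x₀ ∈ S.U)
    (hx₀_stable : Tendsto (fun t => S.phi t x₀) atTop (𝓝 (0 : EuclideanSpace ℝ (Fin 2))))
    {xb : ℝ}
    (hxb : Tendsto (fun t => Real.exp (S.mu * t) • S.phi t x₀) atTop (𝓝 (vec2 xb 0))) :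
    S.h x₀ 0 = xb ∧ S.h x₀ 1 = 0 := by
  have hU : ∀ᶠ t in atTop, S.phi t x₀ ∈ S.U := hx₀_stable (S.U_open.mem_nhds S.U_mem)
  have hc : Tendsto (fun t => S.h (S.phi t x₀)) atTop (𝓝 0) := by
    have := (S.h_smooth 0 S.U_mem).continuousAt.tendsto.comp hx₀_stable
    rwa [S.h_zero] at this
  constructor
  · -- `e^{μt} h(φ_t x₀)` and `e^{μt} φ_t x₀` have the same limit as `h(x) = x + o(|x|)`
    have h1 : (fun t => Real.exp (S.mu * t) • (S.h (S.phi t x₀) - S.phi t x₀)) =o[atTop]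
        (fun t => Real.exp (S.mu * t) • S.phi t x₀) :=
      (Asymptotics.isBigO_refl _ _).smul_isLittleO (S.h_littleO.comp_tendsto hx₀_stable)
    have h2 := (Asymptotics.isLittleO_one_iff ℝ).1 (h1.trans_isBigO (hxb.isBigO_one ℝ))
    have h3 := h2.add hxb
    have h4 := ((PiLp.continuous_apply 2 (fun _ : Fin 2 => ℝ) 0).tendsto _).comp h3
    refine tendsto_nhds_unique (tendsto_const_nhds.congr' ?_) (h4.trans_eq (by simp))
    filter_upwards [hU] with t ht
    have := S.h_conj t x₀ hx₀ ht
    simp [← smul_add, this, ← mul_assoc, ← Real.exp_add]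
  · have h4 := ((PiLp.continuous_apply 2 (fun _ : Fin 2 => ℝ) 1).tendsto _).comp hc
    have h5 : Tendsto (fun t => Real.exp (-(S.lam * t))) atTop (𝓝 0) :=
      Real.tendsto_exp_neg_atTop_nhds_zero.comp (tendsto_id.const_mul_atTop S.lam_pos)
    have h6 := h5.mul h4
    refine tendsto_nhds_unique (tendsto_const_nhds.congr' ?_) (h6.trans_eq (by simp))
    filter_upwards [hU] with t ht
    have := S.h_conj t x₀ hx₀ ht
    simp [this, ← mul_assoc, ← Real.exp_add]

variable {S} in
/-- `D₀` is the second row of `Dh(x₀)`: differentiate the conjugation relation at `x₀` and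
let `t → ∞`, using `Dh(0) = I`. -/
lemma inner_eq_fderiv_h {x₀ : EuclideanSpace ℝ (Fin 2)} (hx₀ : x₀ ∈ S.U)
    (hx₀_stable : Tendsto (fun t => S.phi t x₀) atTop (𝓝 (0 : EuclideanSpace ℝ (Fin 2))))
    {D₀ : EuclideanSpace ℝ (Fin 2)}
    (hD₀ : Tendsto (fun t => Real.exp (-S.lam * t) • fderiv ℝ (S.phi t) x₀) atTop
      (𝓝 ((innerSL ℝ D₀).smulRight (EuclideanSpace.single 1 (1 : ℝ)))))
    (z : EuclideanSpace ℝ (Fin 2)) : fderiv ℝ S.h x₀ z 1 = ⟪D₀, z⟫ := by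
  have hU : ∀ᶠ t in atTop, S.phi t x₀ ∈ S.U := hx₀_stable (S.U_open.mem_nhds S.U_mem)
  have h1 : Tendsto (fun t => fderiv ℝ S.h (S.phi t x₀)) atTop
      (𝓝 (ContinuousLinearMap.id ℝ (EuclideanSpace ℝ (Fin 2)))) := by
    rw [← S.hasFDerivAt_h_zero.fderiv]
    exact ((S.h_smooth 0 S.U_mem).continuousAt_fderiv (by simp)).tendsto.comp hx₀_stable
  have happ := (isBoundedBilinearMap_apply (𝕜 := ℝ) (E := EuclideanSpace ℝ (Fin 2))
    (F := EuclideanSpace ℝ (Fin 2))).continuous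
  have h2 := (happ.tendsto _).comp
    (h1.prodMk_nhds ((happ.tendsto _).comp (hD₀.prodMk_nhds (tendsto_const_nhds (x := z)))))
  have h4 := ((PiLp.continuous_apply 2 (fun _ : Fin 2 => ℝ) 1).tendsto _).comp h2
  refine tendsto_nhds_unique (tendsto_const_nhds.congr' ?_) (h4.trans_eq (by simp))
  filter_upwards [hU] with t ht
  have hphi : HasFDerivAt (S.phi t) (fderiv ℝ (S.phi t) x₀) x₀ :=
    ((S.phi_contDiff t).differentiable (by simp) x₀).hasFDerivAt
  have hh : ∀ x ∈ S.U, HasFDerivAt S.h (fderiv ℝ S.h x) x := fun x hx =>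
    ((S.h_smooth x hx).differentiableAt (by simp)).hasFDerivAt
  let p : EuclideanSpace ℝ (Fin 2) →L[ℝ] ℝ := EuclideanSpace.proj 1
  have e1 := (p.hasFDerivAt.comp x₀ ((hh _ ht).comp x₀ hphi))
  have e2 := (p.hasFDerivAt.comp x₀ (hh _ hx₀)).const_smul (Real.exp (S.lam * t))
  have e3 : (p ∘ S.h ∘ S.phi t) =ᶠ[𝓝 x₀] (Real.exp (S.lam * t) • (p ∘ S.h)) := by
    filter_upwards [S.U_open.mem_nhds hx₀,
      hphi.continuousAt.preimage_mem_nhds (S.U_open.mem_nhds ht)] with x hx hx'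
    simp [p, S.h_conj t x hx hx']
  have e4 := DFunLike.congr_fun (e1.unique (e2.congr_of_eventuallyEq e3)) z
  simp only [p, ContinuousLinearMap.comp_apply, smul_apply,
    PiLp.proj_apply, smul_eq_mul] at e4
  simp only [Function.comp_apply, smul_apply, map_smul, PiLp.smul_apply,
    smul_eq_mul]
  rw [e4, ← mul_assoc, ← Real.exp_add]
  simp

variable {S} in
/-- In the cone `‖z‖ ≤ C ⟪D₀, z⟫`, the second coordinate of `h(x₀ + z)` is asymptotic to
`⟪D₀, z⟫`. -/
lemma tendsto_h_snd_div {x₀ D₀ : EuclideanSpace ℝ (Fin 2)} (hx₀ : x₀ ∈ S.U)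
    (h1 : S.h x₀ 1 = 0) (hD : ∀ z, fderiv ℝ S.h x₀ z 1 = ⟪D₀, z⟫) (C : ℝ) :
    Tendsto (fun z => S.h (x₀ + z) 1 / ⟪D₀, z⟫)
      (𝓝[{z | 0 < ⟪D₀, z⟫ ∧ ‖z‖ ≤ C * ⟪D₀, z⟫}] 0) (𝓝 1) := by
  set K : Set (EuclideanSpace ℝ (Fin 2)) := {z | 0 < ⟪D₀, z⟫ ∧ ‖z‖ ≤ C * ⟪D₀, z⟫} with hK
  have hd : HasFDerivAt S.h (fderiv ℝ S.h x₀) x₀ :=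
    ((S.h_smooth x₀ hx₀).differentiableAt (by simp)).hasFDerivAt
  rw [hasFDerivAt_iff_isLittleO_nhds_zero] at hd
  have hmem : ∀ᶠ z in 𝓝[K] (0 : EuclideanSpace ℝ (Fin 2)), z ∈ K := self_mem_nhdsWithin
  have e1 : (fun z => S.h (x₀ + z) 1 - ⟪D₀, z⟫) =o[𝓝[K] 0] (fun z => z) := by
    refine Asymptotics.IsBigO.trans_isLittleO ?_ (hd.mono nhdsWithin_le_nhds)
    refine Asymptotics.IsBigO.of_bound 1 (Eventually.of_forall fun z => ?_)
    have := abs_apply_le_norm (S.h (x₀ + z) - S.h x₀ - fderiv ℝ S.h x₀ z) 1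
    simpa [h1, hD] using this
  have e2 : (fun z : EuclideanSpace ℝ (Fin 2) => z) =O[𝓝[K] 0] (fun z => (⟪D₀, z⟫ : ℝ)) := by
    refine Asymptotics.IsBigO.of_bound C ?_
    filter_upwards [hmem] with z hz
    rw [Real.norm_of_nonneg hz.1.le]
    exact hz.2
  have e3 := (e1.trans_isBigO e2).tendsto_div_nhds_zero.add_const 1
  rw [zero_add] at e3
  refine e3.congr' ?_
  filter_upwards [hmem] with z hz
  have := hz.1.ne'
  field_simp
  ring

/-! ### Position relative to the diagonal -/

variable {S} in
/-- On a compact time interval `[T, T₁]`, trajectories starting near `x₀` stay below the diagonal,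
because the orbit of `x₀` does. -/
lemma eventually_below_diagonal {x₀ : EuclideanSpace ℝ (Fin 2)} (hx₀ : x₀ ∈ S.U) {xb : ℝ}
    (hxb_pos : 0 < xb) (hxb_lt : xb ≤ S.delta) (hb0 : S.h x₀ 0 = xb) (hb1 : S.h x₀ 1 = 0)
    {T : ℝ} (hT : 0 ≤ T) (hdiag : ∀ t : ℝ, T ≤ t → |S.phi t x₀ 1| < |S.phi t x₀ 0|) (T₁ : ℝ) :
    ∀ᶠ x in 𝓝 x₀, ∀ t ∈ Set.Icc T T₁,
      |S.hinv (S.lin t (S.h x)) 1| < |S.hinv (S.lin t (S.h x)) 0| := by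
  have hmu := S.mu_pos
  refine isCompact_Icc.eventually_forall_of_forall_eventually fun t ht => ?_
  have ht0 : 0 ≤ t := hT.trans ht.1
  have hbd : ∀ s ∈ Set.Icc 0 t, ‖S.lin s (S.h x₀)‖ ≤ S.delta := fun s hs => by
    refine (norm_le_abs_add_abs _).trans ?_
    have : Real.exp (-S.mu * s) ≤ 1 :=
      Real.exp_le_one_iff.2 (by nlinarith [mul_nonneg hmu.le hs.1])
    simp only [SaddleFlow.lin, vec2_apply_zero, vec2_apply_one, hb0, hb1, mul_zero, abs_zero,
      add_zero, abs_mul, abs_of_pos hxb_pos, Real.abs_exp]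
    nlinarith
  have hc : ContinuousAt (fun p : EuclideanSpace ℝ (Fin 2) × ℝ =>
      S.hinv (S.lin p.2 (S.h p.1))) (x₀, t) := by
    have h1 : ContinuousAt (fun p : EuclideanSpace ℝ (Fin 2) × ℝ => S.h p.1) (x₀, t) :=
      ContinuousAt.comp (f := Prod.fst) (S.h_smooth x₀ hx₀).continuousAt continuousAt_fst
    have h2 : ContinuousAt (fun p : EuclideanSpace ℝ (Fin 2) × ℝ =>
        S.lin p.2 (S.h p.1)) (x₀, t) :=
      ContinuousAt.comp (f := fun p : EuclideanSpace ℝ (Fin 2) × ℝ => (p.2, S.h p.1))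
        (S.continuous_lin.continuousAt) (continuousAt_snd.prodMk h1)
    exact ContinuousAt.comp
      (f := fun p : EuclideanSpace ℝ (Fin 2) × ℝ => S.lin p.2 (S.h p.1))
      (S.continuousAt_hinv (hbd t ⟨ht0, le_rfl⟩)) h2
  have hci : ∀ i : Fin 2, ContinuousAt (fun p : EuclideanSpace ℝ (Fin 2) × ℝ =>
      |S.hinv (S.lin p.2 (S.h p.1)) i|) (x₀, t) := fun i =>
    ((PiLp.continuous_apply 2 (fun _ : Fin 2 => ℝ) i).continuousAt.comp hc).abs
  refine (hci 1).eventually_lt (hci 0) ?_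
  simp only
  rw [← S.phi_eq_hinv hx₀ hbd ⟨ht0, le_rfl⟩]
  exact hdiag t ht.1

variable {S} in
/-- A trajectory strictly below the diagonal on `[T, ℓ - ε]` and strictly above it at `ℓ + ε`
has a first crossing time, which lies within `ε` of `ℓ`. -/
lemma crossing_of_bounds {x : EuclideanSpace ℝ (Fin 2)} {T ℓ ε : ℝ} (hε : 0 < ε)
    (hTL : T ≤ ℓ - ε) (hend : |S.phi (ℓ + ε) x 0| < |S.phi (ℓ + ε) x 1|)
    (hbefore : ∀ t ∈ Set.Icc T (ℓ - ε), |S.phi t x 1| < |S.phi t x 0|) :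
    IsLeast {t : ℝ | T ≤ t ∧ |S.phi t x 0| = |S.phi t x 1|}
      (sInf {t : ℝ | T ≤ t ∧ |S.phi t x 0| = |S.phi t x 1|}) ∧
    |sInf {t : ℝ | T ≤ t ∧ |S.phi t x 0| = |S.phi t x 1|} - ℓ| < ε := by
  set A : Set ℝ := {t : ℝ | T ≤ t ∧ |S.phi t x 0| = |S.phi t x 1|} with hA
  have hci : ∀ i : Fin 2, Continuous fun t => |S.phi t x i| := fun i =>
    ((PiLp.continuous_apply 2 (fun _ : Fin 2 => ℝ) i).comp (S.continuous_phi _)).abs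
  have hclosed : IsClosed A := isClosed_Ici.inter (isClosed_eq (hci 0) (hci 1))
  have hbdd : BddBelow A := ⟨T, fun t ht => ht.1⟩
  obtain ⟨c, hc, hc'⟩ : ∃ c ∈ Set.Icc (ℓ - ε) (ℓ + ε),
      |S.phi c x 0| - |S.phi c x 1| = 0 :=
    intermediate_value_Icc' (by linarith) ((hci 0).sub (hci 1)).continuousOn
      ⟨(sub_neg.2 hend).le, (sub_pos.2 (hbefore _ ⟨hTL, le_rfl⟩)).le⟩
  have hcA : c ∈ A := ⟨hTL.trans hc.1, sub_eq_zero.1 hc'⟩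
  have hmemA : sInf A ∈ A := hclosed.csInf_mem ⟨c, hcA⟩ hbdd
  refine ⟨⟨hmemA, fun t ht => csInf_le hbdd ht⟩, abs_lt.2 ⟨?_, ?_⟩⟩
  · by_contra! h
    exact (hbefore _ ⟨hmemA.1, by linarith⟩).ne' hmemA.2
  · have h1 : c ≠ ℓ + ε := by
      rintro rfl
      exact hend.ne hcA.2
    have h2 := csInf_le hbdd hcA
    have h3 := lt_of_le_of_ne hc.2 h1
    linarith

variable {S} in
/-- Confinement of a trajectory on either side of the diagonal before time `ℓ - ε` and at time
`ℓ + ε`. Here `ℓ` is an approximate crossing time of the linear trajectory: the coordinates of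
`e^{Bt} h(x)` have ratio `r e^{(λ+μ)(t-ℓ)}` with `r` between `q` and `1/q`. -/
lemma bounds_of_ratio {x : EuclideanSpace ℝ (Fin 2)} (hx : x ∈ S.U)
    {T T₁ ℓ ε q r₀ a r : ℝ} (hT : 0 ≤ T) (hε : 0 < ε)
    (hq : q = Real.exp (-((S.lam + S.mu) * ε / 2))) (hq1 : q < 1)
    (hr₀ : ∀ y : EuclideanSpace ℝ (Fin 2), ‖y‖ < r₀ → ‖S.hinv y - y‖ ≤ (1 - q) / 8 * ‖y‖)
    (ha : S.h x 0 = a) (hb : S.h x 1 = r * a * Real.exp (-((S.lam + S.mu) * ℓ)))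
    (hapos : 0 < a) (haδ : a ≤ S.delta / 2) (hrq : q < r) (hrq' : r < q⁻¹)
    (hTL : T ≤ ℓ - ε)
    (hmδ : r * a * Real.exp (S.lam * ε - S.mu * ℓ) < S.delta / 2)
    (hmr : r * a * Real.exp (S.lam * ε - S.mu * ℓ) < r₀ / 2)
    (htube : ∀ t ∈ Set.Icc T T₁,
      |S.hinv (S.lin t (S.h x)) 1| < |S.hinv (S.lin t (S.h x)) 0|)
    (hT₁ : ∀ t, T₁ ≤ t → 2 * a * Real.exp (-S.mu * t) < r₀) :
    (|S.phi (ℓ + ε) x 0| < |S.phi (ℓ + ε) x 1| ∧ T ≤ ℓ - ε) ∧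
      ∀ t ∈ Set.Icc T (ℓ - ε), |S.phi t x 1| < |S.phi t x 0| := by
  have hlam := S.lam_pos
  have hmu := S.mu_pos
  have hq0 : 0 < q := hq ▸ Real.exp_pos _
  have hrpos : 0 < r := hq0.trans hrq
  -- the two coordinates of the linear trajectory and their ratio
  have hy0 : ∀ t, S.lin t (S.h x) 0 = a * Real.exp (-S.mu * t) := fun t => by
    simp [lin, ha, mul_comm]
  have hy1 : ∀ t, S.lin t (S.h x) 1 =
      r * a * Real.exp (S.lam * t - (S.lam + S.mu) * ℓ) := fun t => by
    have : S.lin t (S.h x) 1 = Real.exp (S.lam * t) * S.h x 1 := by simp [lin]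
    rw [this, hb, sub_eq_add_neg, Real.exp_add]
    ring
  have hy01 : ∀ t, S.lin t (S.h x) 1 =
      r * Real.exp ((S.lam + S.mu) * (t - ℓ)) * S.lin t (S.h x) 0 := fun t => by
    rw [hy0, hy1, show S.lam * t - (S.lam + S.mu) * ℓ =
      (S.lam + S.mu) * (t - ℓ) + -S.mu * t by ring, Real.exp_add]
    ring
  have hy0pos : ∀ t, 0 < S.lin t (S.h x) 0 := fun t => by rw [hy0]; positivity
  have hy1pos : ∀ t, 0 < S.lin t (S.h x) 1 := fun t => by rw [hy1]; positivity
  have hy1m : ∀ t, t ≤ ℓ + ε →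
      S.lin t (S.h x) 1 ≤ r * a * Real.exp (S.lam * ε - S.mu * ℓ) := fun t ht => by
    rw [hy1]
    refine mul_le_mul_of_nonneg_left (Real.exp_le_exp.2 ?_) (by positivity)
    nlinarith [mul_le_mul_of_nonneg_left ht hlam.le]
  have hnorm : ∀ t, ‖S.lin t (S.h x)‖ ≤
      S.lin t (S.h x) 0 + S.lin t (S.h x) 1 := fun t => by
    have := norm_le_abs_add_abs (S.lin t (S.h x))
    rwa [abs_of_pos (hy0pos t), abs_of_pos (hy1pos t)] at this
  have hbd : ∀ s ∈ Set.Icc 0 (ℓ + ε), ‖S.lin s (S.h x)‖ ≤ S.delta := fun s hs => by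
    have h1 : Real.exp (-S.mu * s) ≤ 1 :=
      Real.exp_le_one_iff.2 (by nlinarith [mul_nonneg hmu.le hs.1])
    have h2 := hy1m s hs.2
    have h3 := hnorm s
    have h4 := hy0 s
    nlinarith
  have hphi : ∀ s ∈ Set.Icc 0 (ℓ + ε),
      S.phi s x = S.hinv (S.lin s (S.h x)) := fun s hs =>
    S.phi_eq_hinv hx hbd hs
  have hqq : q * q = Real.exp (-((S.lam + S.mu) * ε)) := by
    rw [hq, ← Real.exp_add]; ring_nf
  refine ⟨⟨?_, by linarith⟩, fun t ht => ?_⟩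
  · rw [hphi (ℓ + ε) ⟨by linarith, le_rfl⟩]
    set y := S.lin (ℓ + ε) (S.h x) with hy
    have hy0' : 0 < y 0 := hy0pos _
    have hy1' : 0 < y 1 := hy1pos _
    have hE : Real.exp ((S.lam + S.mu) * (ℓ + ε - ℓ)) * (q * q) = 1 := by
      rw [hqq, ← Real.exp_add]; ring_nf; exact Real.exp_zero
    -- `q y₂ = (r / q) y₁ ≥ y₁`
    have hc : y 0 ≤ q * y 1 := by
      have h1 : q * (q * y 1) = r * y 0 := by
        have := hy01 (ℓ + ε)
        rw [← hy] at this
        rw [this]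
        linear_combination (r * y 0) * hE
      have h2 : q * y 0 ≤ q * (q * y 1) := by
        rw [h1]; exact mul_le_mul_of_nonneg_right hrq.le hy0'.le
      exact le_of_mul_le_mul_left h2 hq0
    have hn : ‖y‖ ≤ y 0 + y 1 := hnorm _
    have hm1 : y 1 ≤ r * a * Real.exp (S.lam * ε - S.mu * ℓ) := hy1m _ le_rfl
    refine coord_lt_of_close (y := y) hq1 ?_ (hr₀ _ ?_) ?_ ?_
    · rw [abs_of_pos hy0', abs_of_pos hy1']; linarith
    · nlinarith
    · rwa [abs_of_pos hy1']
    · rwa [abs_of_pos hy0', abs_of_pos hy1']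
  · rw [hphi t ⟨hT.trans ht.1, by linarith [ht.2]⟩]
    rcases le_total t T₁ with htT | htT
    · exact htube t ⟨ht.1, htT⟩
    set y := S.lin t (S.h x) with hy
    have hy0' : 0 < y 0 := hy0pos _
    have hy1' : 0 < y 1 := hy1pos _
    have hc : y 1 ≤ q * y 0 := by
      have h1 : Real.exp ((S.lam + S.mu) * (t - ℓ)) ≤ q * q := by
        rw [hqq]
        refine Real.exp_le_exp.2 ?_
        have : t - ℓ ≤ -ε := by linarith [ht.2]
        nlinarith [mul_le_mul_of_nonneg_left this (add_pos hlam hmu).le]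
      have h2 : r * Real.exp ((S.lam + S.mu) * (t - ℓ)) ≤ q := by
        calc _ ≤ q⁻¹ * (q * q) := by gcongr
          _ = q := by field_simp
      rw [hy, hy01]
      exact mul_le_mul_of_nonneg_right h2 hy0'.le
    have hn : ‖y‖ ≤ y 0 + y 1 := hnorm _
    refine coord_lt_of_close (y := y) hq1 ?_ (hr₀ _ ?_) ?_ ?_
    · rwa [abs_of_pos hy0', abs_of_pos hy1']
    · have h1 := hT₁ t htT
      have h2 : y 0 = a * Real.exp (-S.mu * t) := hy0 t
      nlinarith
    · rwa [abs_of_pos hy0']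
    · rwa [abs_of_pos hy0', abs_of_pos hy1']

end SaddleFlow

/-- Intermediate claim in the proof of Theorem 3.5: the first time `t_z ≥ T` at which
`|φ_t(x₀+z)₁| = |φ_t(x₀+z)₂|` is attained, and
`t_z − (1/(λ+μ)) log(x̄₀/(D₀z)) → 0` as `z → 0` with `D₀z > 0`, `|z| ≤ C D₀z`. -/
theorem diagonal_crossing_time
    (S : SaddleFlow) (x₀ : EuclideanSpace ℝ (Fin 2))
    (hx₀_pos : 0 < ‖x₀‖) (hx₀_lt : ‖x₀‖ < S.delta / 8)
    (hx₀_stable : Tendsto (fun t => S.phi t x₀) atTop (𝓝 (0 : EuclideanSpace ℝ (Fin 2))))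
    (xb : ℝ) (hxb_pos : 0 < xb) (hxb_lt : |xb| < S.delta / 4)
    (hxb : Tendsto (fun t => Real.exp (S.mu * t) • S.phi t x₀) atTop (𝓝 (vec2 xb 0)))
    (D₀ : EuclideanSpace ℝ (Fin 2)) (hD₀_ne : D₀ ≠ 0)
    (hD₀ : Tendsto (fun t => Real.exp (-S.lam * t) • fderiv ℝ (S.phi t) x₀) atTop
      (𝓝 ((innerSL ℝ D₀).smulRight (EuclideanSpace.single 1 (1 : ℝ)))))
    (T : ℝ) (hT : 0 ≤ T)
    (hdiag : ∀ t : ℝ, T ≤ t → |S.phi t x₀ 1| < |S.phi t x₀ 0|) :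
    ∀ C : ℝ, 0 < C → ∀ ε : ℝ, 0 < ε → ∃ ρ : ℝ, 0 < ρ ∧
      ∀ z : EuclideanSpace ℝ (Fin 2), 0 < ‖z‖ → ‖z‖ < ρ → 0 < ⟪D₀, z⟫ →
        ‖z‖ ≤ C * ⟪D₀, z⟫ →
        IsLeast {t : ℝ | T ≤ t ∧ |S.phi t (x₀ + z) 0| = |S.phi t (x₀ + z) 1|}
          (sInf {t : ℝ | T ≤ t ∧ |S.phi t (x₀ + z) 0| = |S.phi t (x₀ + z) 1|}) ∧
        |sInf {t : ℝ | T ≤ t ∧ |S.phi t (x₀ + z) 0| = |S.phi t (x₀ + z) 1|} -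
          (1 / (S.lam + S.mu)) * Real.log (xb / ⟪D₀, z⟫)| < ε := by
  intro C hC ε hε
  have hx₀δ : ‖x₀‖ ≤ S.delta := by linarith [S.delta_pos]
  have hx₀ : x₀ ∈ S.U := S.mem_U hx₀δ
  obtain ⟨hb0, hb1⟩ := SaddleFlow.h_base hx₀ hx₀_stable hxb
  have hDh := SaddleFlow.inner_eq_fderiv_h hx₀ hx₀_stable hD₀
  have hlam := S.lam_pos
  have hmu := S.mu_pos
  have hδ := S.delta_pos
  rw [abs_of_pos hxb_pos] at hxb_lt
  set K : Set (EuclideanSpace ℝ (Fin 2)) := {z | 0 < ⟪D₀, z⟫ ∧ ‖z‖ ≤ C * ⟪D₀, z⟫} with hK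
  set l := 𝓝[K] (0 : EuclideanSpace ℝ (Fin 2)) with hl
  set q : ℝ := Real.exp (-((S.lam + S.mu) * ε / 2)) with hq
  have hq0 : 0 < q := Real.exp_pos _
  have hq1 : q < 1 := Real.exp_lt_one_iff.2 (by simp only [Left.neg_neg_iff]; positivity)
  -- `h⁻¹` moves vectors of norm less than `r₀` by a relative amount at most `(1 - q) / 8`
  obtain ⟨r₀, hr₀, hr₀'⟩ := Metric.eventually_nhds_iff.1
    (S.hinv_isLittleO.bound (by linarith : 0 < (1 - q) / 8))
  simp only [dist_zero_right] at hr₀'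
  let a : EuclideanSpace ℝ (Fin 2) → ℝ := fun z => S.h (x₀ + z) 0
  let b : EuclideanSpace ℝ (Fin 2) → ℝ := fun z => S.h (x₀ + z) 1
  let L : EuclideanSpace ℝ (Fin 2) → ℝ :=
    fun z => (1 / (S.lam + S.mu)) * Real.log (xb / ⟪D₀, z⟫)
  let r : EuclideanSpace ℝ (Fin 2) → ℝ := fun z => (b z / ⟪D₀, z⟫) / (a z / xb)
  have hmem : ∀ᶠ z in l, z ∈ K := self_mem_nhdsWithin
  have hadd : Tendsto (fun z => x₀ + z) l (𝓝 x₀) := by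
    have : Continuous fun z : EuclideanSpace ℝ (Fin 2) => x₀ + z := by fun_prop
    simpa using (this.tendsto 0).mono_left nhdsWithin_le_nhds
  have ha : Tendsto a l (𝓝 xb) := by
    have h1 := (S.h_smooth x₀ hx₀).continuousAt.tendsto.comp hadd
    have h2 := ((PiLp.continuous_apply 2 (fun _ : Fin 2 => ℝ) 0).tendsto _).comp h1
    exact h2.trans_eq (by rw [hb0])
  have hr : Tendsto r l (𝓝 1) := by
    have := (SaddleFlow.tendsto_h_snd_div hx₀ hb1 hDh C).div (ha.div_const xb)
      (by rw [div_self hxb_pos.ne']; exact one_ne_zero)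
    rwa [div_self hxb_pos.ne', div_one] at this
  have hD0 : Tendsto (fun z => (⟪D₀, z⟫ : ℝ)) l (𝓝[>] 0) := by
    refine tendsto_nhdsWithin_iff.2 ⟨?_, hmem.mono fun z hz => hz.1⟩
    have : Continuous fun z : EuclideanSpace ℝ (Fin 2) => (⟪D₀, z⟫ : ℝ) := by fun_prop
    simpa using (this.tendsto 0).mono_left nhdsWithin_le_nhds
  have hL : Tendsto L l atTop := by
    refine (Real.tendsto_log_atTop.comp ?_).const_mul_atTop (by positivity)
    simpa [div_eq_mul_inv] using (tendsto_inv_nhdsGT_zero.comp hD0).const_mul_atTop hxb_pos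
  -- the bound for the second coordinate of the linear trajectory up to time `L + ε`
  let m : EuclideanSpace ℝ (Fin 2) → ℝ := fun z => r z * a z * Real.exp (S.lam * ε - S.mu * L z)
  have hm : Tendsto m l (𝓝 0) := by
    have h1 : Tendsto (fun z => Real.exp (S.lam * ε - S.mu * L z)) l (𝓝 0) := by
      refine Real.tendsto_exp_atBot.comp ?_
      simp only [sub_eq_add_neg]
      exact tendsto_atBot_add_const_left _ _
        (tendsto_neg_atTop_atBot.comp (hL.const_mul_atTop hmu))
    simpa using (hr.mul ha).mul h1
  -- after `T₁` the contracting coordinate is small enough for the estimate on `h⁻¹`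
  obtain ⟨T₁, hT₁⟩ : ∃ T₁ : ℝ, ∀ t, T₁ ≤ t → 4 * xb * Real.exp (-S.mu * t) < r₀ := by
    have h1 : Tendsto (fun t => Real.exp (-(S.mu * t))) atTop (𝓝 0) :=
      Real.tendsto_exp_neg_atTop_nhds_zero.comp (tendsto_id.const_mul_atTop hmu)
    have h2 : Tendsto (fun t => 4 * xb * Real.exp (-S.mu * t)) atTop (𝓝 0) := by
      simpa using h1.const_mul (4 * xb)
    exact eventually_atTop.1 (h2.eventually (gt_mem_nhds hr₀))
  have htube := SaddleFlow.eventually_below_diagonal hx₀ hxb_pos (by linarith) hb0 hb1 hT hdiag T₁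
  have hgood : ∀ᶠ z in l,
      (|S.phi (L z + ε) (x₀ + z) 0| < |S.phi (L z + ε) (x₀ + z) 1| ∧ T ≤ L z - ε) ∧
      ∀ t ∈ Set.Icc T (L z - ε), |S.phi t (x₀ + z) 1| < |S.phi t (x₀ + z) 0| := by
    filter_upwards [hmem, hadd.eventually htube, hadd (S.U_open.mem_nhds hx₀),
      ha.eventually (lt_mem_nhds hxb_pos),
      ha.eventually (gt_mem_nhds (by linarith : xb < 2 * xb)),
      hr.eventually (lt_mem_nhds hq1), hr.eventually (gt_mem_nhds (one_lt_inv₀ hq0 |>.2 hq1)),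
      hL.eventually_ge_atTop (T + ε), hm.eventually (gt_mem_nhds (by linarith : 0 < S.delta / 2)),
      hm.eventually (gt_mem_nhds (by linarith : 0 < r₀ / 2))]
      with z hzK htz hzU hapos ha2 hrq hrq' hLz hmδ hmr
    have hD : 0 < ⟪D₀, z⟫ := hzK.1
    have hbz : b z = r z * a z * Real.exp (-((S.lam + S.mu) * L z)) := by
      have : (S.lam + S.mu) * L z = Real.log (xb / ⟪D₀, z⟫) := by
        simp only [L]; field_simp
      rw [this, Real.exp_neg, Real.exp_log (div_pos hxb_pos hD)]
      simp only [r]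
      field_simp
    refine SaddleFlow.bounds_of_ratio hzU hT hε hq hq1 (fun y hy => hr₀' hy) rfl hbz hapos
      (by linarith) hrq hrq' (by linarith) hmδ hmr htz fun t ht => lt_of_le_of_lt ?_ (hT₁ t ht)
    exact mul_le_mul_of_nonneg_right (by linarith : 2 * a z ≤ 4 * xb) (Real.exp_pos _).le
  obtain ⟨ρ, hρ, hgood⟩ := Metric.eventually_nhds_iff.1 (eventually_nhdsWithin_iff.1 hgood)
  refine ⟨ρ, hρ, fun z _ hzρ hDz hzC => ?_⟩
  obtain ⟨⟨hend, hTL⟩, hbefore⟩ := hgood (by simpa using hzρ) ⟨hDz, hzC⟩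
  change _ ∧ |_ - L z| < ε
  exact SaddleFlow.crossing_of_bounds hε hTL hend hbefore
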